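/- Let G be a signed eulerian graph with an odd number of negative edges. If any two unbalanced circuits of G have an edge in common, then there exists an edge e of G that is contained in every unbalanced circuit of G; in particular, G is tightly unbalanced. -/

import Mathlib

open Finset

/-- A signed multigraph on vertex type `V` with edge type `E`: each edge `e`
consists of two half-edges indexed by `Bool`; `ends e i` is the end-vertex at
which the half-edge `(e, i)` is attached (loops and multiple edges are
allowed), and `sign e ∈ {1, -1}` is the sign of the edge `e`. -/
structure SignedGraph (V E : Type) where
  ends : E → Bool → V
  sign : E → ℤˣ

namespace SignedGraph

variable {V E : Type} [Fintype V] [Fintype E] [DecidableEq V] [DecidableEq E]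

/-- The valency of `v` in the subgraph spanned by the edge set `S`:
the number of half-edges of edges of `S` attached at `v` (a loop at `v`
contributes `2`). -/
def valencyOn (G : SignedGraph V E) (S : Finset E) (v : V) : ℕ :=
  (univ.filter fun p : E × Bool => p.1 ∈ S ∧ G.ends p.1 p.2 = v).card

/-- The valency of a vertex in `G`. -/
def valency (G : SignedGraph V E) (v : V) : ℕ :=
  G.valencyOn univ v

/-- The set of vertices incident with some edge of `S`. -/
def suppV (G : SignedGraph V E) (S : Finset E) : Finset V :=
  univ.filter fun v => ∃ e ∈ S, ∃ i : Bool, G.ends e i = v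

/-- `u` and `v` are joined by an edge of `S`. -/
def AdjOn (G : SignedGraph V E) (S : Finset E) (u v : V) : Prop :=
  ∃ e ∈ S, ∃ i : Bool, G.ends e i = u ∧ G.ends e (!i) = v

/-- The subgraph spanned by the edge set `S` is connected: any two vertices
incident with edges of `S` are joined by a walk using edges of `S`. -/
def ConnOn (G : SignedGraph V E) (S : Finset E) : Prop :=
  ∀ u ∈ G.suppV S, ∀ v ∈ G.suppV S, Relation.ReflTransGen (G.AdjOn S) u v

/-- `G` is connected (as a graph on the whole vertex set `V`). -/
def Connected (G : SignedGraph V E) : Prop :=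
  Nonempty V ∧ ∀ u v : V, Relation.ReflTransGen (G.AdjOn univ) u v

/-- The edge set `S` spans a circuit: a nonempty connected `2`-regular
subgraph. -/
def IsCircuit (G : SignedGraph V E) (S : Finset E) : Prop :=
  S.Nonempty ∧ G.ConnOn S ∧ ∀ v ∈ G.suppV S, G.valencyOn S v = 2

/-- The sign of a set of edges: the product of the signs of its edges. -/
def signOf (G : SignedGraph V E) (S : Finset E) : ℤˣ :=
  ∏ e ∈ S, G.sign e

/-- The negative edges among `S`. -/
def negEdges (G : SignedGraph V E) (S : Finset E) : Finset E :=
  S.filter fun e => G.sign e = -1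

/-- A balanced circuit: a circuit of sign `+1`. -/
def IsBalancedCircuit (G : SignedGraph V E) (S : Finset E) : Prop :=
  G.IsCircuit S ∧ G.signOf S = 1

/-- An unbalanced circuit: a circuit of sign `-1`. -/
def IsUnbalancedCircuit (G : SignedGraph V E) (S : Finset E) : Prop :=
  G.IsCircuit S ∧ G.signOf S = -1

/-- `G` is balanced: it contains no unbalanced circuit. -/
def Balanced (G : SignedGraph V E) : Prop :=
  ∀ S : Finset E, G.IsCircuit S → G.signOf S = 1

/-- `G` is tightly unbalanced: it is unbalanced, but for some edge `f` the
graph `G - f` is balanced. -/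
def TightlyUnbalanced (G : SignedGraph V E) : Prop :=
  ¬ G.Balanced ∧ ∃ f : E, ∀ S : Finset E, G.IsCircuit S → f ∉ S → G.signOf S = 1

/-- `G` is eulerian: connected with all valencies even. -/
def Eulerian (G : SignedGraph V E) : Prop :=
  G.Connected ∧ ∀ v : V, Even (G.valency v)

/-- The edge set `S` spans an eulerian subgraph of `G`. -/
def EulerianOn (G : SignedGraph V E) (S : Finset E) : Prop :=
  S.Nonempty ∧ G.ConnOn S ∧ ∀ v : V, Even (G.valencyOn S v)

/-- An orientation (bidirection) of `G`: `dir e i = true` means that the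
half-edge `(e, i)` is directed towards its end-vertex, `dir e i = false` that
it is directed away from it.  Compatibility: a positive edge becomes an
ordinary directed edge (one half-edge in, one out) and a negative edge becomes
a broken (extroverted or introverted) edge. -/
structure Orientation (G : SignedGraph V E) where
  dir : E → Bool → Bool
  compat : ∀ e : E, G.sign e = 1 ↔ dir e false ≠ dir e true

/-- `φ` is a flow on `G` with respect to the orientation `O`: at every vertex
`v`, the sum of values on half-edges directed into `v` equals the sum of
values on half-edges directed out of `v` (Kirchhoff's law). -/
def IsFlow {A : Type} [AddCommGroup A] (G : SignedGraph V E)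
    (O : G.Orientation) (φ : E → A) : Prop :=
  ∀ v : V,
    ∑ p ∈ univ.filter (fun p : E × Bool => G.ends p.1 p.2 = v),
      (if O.dir p.1 p.2 then φ p.1 else -φ p.1) = 0

/-- `G` admits a nowhere-zero `A`-flow. -/
def HasNZFlow (G : SignedGraph V E) (A : Type) [AddCommGroup A] : Prop :=
  ∃ (O : G.Orientation) (φ : E → A), G.IsFlow O φ ∧ ∀ e : E, φ e ≠ 0

/-- `G` is flow-admissible: it admits a nowhere-zero integer flow. -/
def FlowAdmissible (G : SignedGraph V E) : Prop :=
  ∃ (O : G.Orientation) (φ : E → ℤ), G.IsFlow O φ ∧ ∀ e : E, φ e ≠ 0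

/-- `G` admits a nowhere-zero `k`-flow: an integer flow with all values in
`{±1, …, ±(k-1)}`. -/
def HasNZkFlow (G : SignedGraph V E) (k : ℕ) : Prop :=
  ∃ (O : G.Orientation) (φ : E → ℤ), G.IsFlow O φ ∧
    ∀ e : E, φ e ≠ 0 ∧ |φ e| < (k : ℤ)

/-- `G` is triply odd: it can be decomposed into three edge-disjoint eulerian
subgraphs, each with an odd number of negative edges, sharing a common
vertex. -/
def TriplyOdd (G : SignedGraph V E) : Prop :=
  ∃ S₁ S₂ S₃ : Finset E,
    Disjoint S₁ S₂ ∧ Disjoint S₁ S₃ ∧ Disjoint S₂ S₃ ∧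
    S₁ ∪ S₂ ∪ S₃ = univ ∧
    G.EulerianOn S₁ ∧ G.EulerianOn S₂ ∧ G.EulerianOn S₃ ∧
    Odd (G.negEdges S₁).card ∧ Odd (G.negEdges S₂).card ∧
    Odd (G.negEdges S₃).card ∧
    ∃ v : V, v ∈ G.suppV S₁ ∧ v ∈ G.suppV S₂ ∧ v ∈ G.suppV S₃

/-- The edge set `P` spans a (nontrivial) path from `u` to `v`: a connected
subgraph in which `u` and `v` have valency `1` and all other vertices have
valency `2`. -/
def IsPathOn (G : SignedGraph V E) (P : Finset E) (u v : V) : Prop :=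
  u ≠ v ∧ G.ConnOn P ∧ u ∈ G.suppV P ∧ v ∈ G.suppV P ∧
  G.valencyOn P u = 1 ∧ G.valencyOn P v = 1 ∧
  ∀ w ∈ G.suppV P, w ≠ u → w ≠ v → G.valencyOn P w = 2

/-- `T` spans a signed circuit of type (2): the union of two unbalanced
circuits meeting at a single vertex. -/
def IsType2 (G : SignedGraph V E) (T : Finset E) : Prop :=
  ∃ (S₁ S₂ : Finset E) (v : V),
    G.IsUnbalancedCircuit S₁ ∧ G.IsUnbalancedCircuit S₂ ∧ Disjoint S₁ S₂ ∧
    G.suppV S₁ ∩ G.suppV S₂ = {v} ∧ S₁ ∪ S₂ = T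

/-- `T` spans a signed circuit of type (3): the union of two vertex-disjoint
unbalanced circuits together with a path meeting the circuits only at its
ends. -/
def IsType3 (G : SignedGraph V E) (T : Finset E) : Prop :=
  ∃ (S₁ S₂ P : Finset E) (u v : V),
    G.IsUnbalancedCircuit S₁ ∧ G.IsUnbalancedCircuit S₂ ∧
    Disjoint (G.suppV S₁) (G.suppV S₂) ∧
    G.IsPathOn P u v ∧ u ∈ G.suppV S₁ ∧ v ∈ G.suppV S₂ ∧
    G.suppV P ∩ G.suppV S₁ = {u} ∧ G.suppV P ∩ G.suppV S₂ = {v} ∧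
    Disjoint P (S₁ ∪ S₂) ∧ S₁ ∪ S₂ ∪ P = T

/-- `T` spans a signed circuit: a balanced circuit, or a signed circuit of
type (2) or (3). -/
def IsSignedCircuit (G : SignedGraph V E) (T : Finset E) : Prop :=
  G.IsBalancedCircuit T ∨ G.IsType2 T ∨ G.IsType3 T

/-- `T` spans a weak unbalanced bicircuit: two edge-disjoint unbalanced
circuits (not necessarily vertex-disjoint) joined by a possibly trivial path
having no edge in the two circuits. -/
def IsWeakBicircuit (G : SignedGraph V E) (T : Finset E) : Prop :=
  ∃ C₁ C₂ : Finset E,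
    G.IsUnbalancedCircuit C₁ ∧ G.IsUnbalancedCircuit C₂ ∧ Disjoint C₁ C₂ ∧
    (((∃ v : V, v ∈ G.suppV C₁ ∧ v ∈ G.suppV C₂) ∧ T = C₁ ∪ C₂) ∨
      ∃ (P : Finset E) (u v : V),
        G.IsPathOn P u v ∧ u ∈ G.suppV C₁ ∧ v ∈ G.suppV C₂ ∧
        Disjoint P (C₁ ∪ C₂) ∧ T = C₁ ∪ C₂ ∪ P)

/-- Every connected component of `G - f` contains an unbalanced circuit,
i.e. `G - f` has no balanced component. -/
def NoBalancedComponentAvoiding (G : SignedGraph V E) (f : E) : Prop :=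
  ∀ u : V, ∃ S : Finset E,
    G.IsCircuit S ∧ G.signOf S = -1 ∧ f ∉ S ∧
    ∀ w ∈ G.suppV S, Relation.ReflTransGen (G.AdjOn (univ.erase f)) w u

/-- `G` is 2-edge-connected: connected, and still connected after removing
any single edge. -/
def TwoEdgeConnected (G : SignedGraph V E) : Prop :=
  G.Connected ∧ ∀ f : E, ∀ u v : V,
    Relation.ReflTransGen (G.AdjOn (univ.erase f)) u v

/-- `G` is antibalanced: replacing its signature `σ` by `-σ` makes it
balanced. -/
def Antibalanced (G : SignedGraph V E) : Prop :=
  ∀ S : Finset E, G.IsCircuit S → (∏ e ∈ S, (-G.sign e)) = 1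

end SignedGraph

/-!
The edge sets with all valencies even form the cycle space, and every unbalanced element of it
contains an unbalanced circuit. So it suffices to show: if `A` is an unbalanced cycle and no two
unbalanced cycles inside `A` are disjoint, then some switching leaves a single negative edge
in `A`. That edge then lies in every unbalanced cycle, since switching preserves the signs of
cycles.

Induct on `A`. If no two edges of `A` are adjacent, all of them are loops and at most one is
negative. Otherwise merge two adjacent edges `e₁`, `e₂` into one, with the product sign. By
induction the merged graph can be switched to have one negative edge, so in the same switching
of `G` either `A` has one negative edge or it has three, `e₁` and `e₂` among them. In the latter
case, if some vertex set has more negative than positive edges leaving it, switching at it lowers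
the number of negative edges to one. If no vertex set does, the positive edges of `A` contain a
trail joining the far ends of `e₁` and `e₂` through their common end; its two halves close up
with `e₁` and `e₂` to disjoint unbalanced cycles.
-/

namespace SignedGraph

variable {V E : Type} (G : SignedGraph V E)

/-- `G.ReachOn S x y`: some walk using only edges of `S` leads from `x` to `y`. -/
abbrev ReachOn (S : Finset E) : V → V → Prop :=
  Relation.ReflTransGen (G.AdjOn S)

variable {G} in
theorem AdjOn.symm {S : Finset E} {x y : V} (h : G.AdjOn S x y) : G.AdjOn S y x := by
  obtain ⟨e, he, i, hx, hy⟩ := h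
  exact ⟨e, he, !i, hy, by rwa [Bool.not_not]⟩

theorem adjOn_ends {S : Finset E} {e : E} (he : e ∈ S) (i : Bool) :
    G.AdjOn S (G.ends e i) (G.ends e (!i)) :=
  ⟨e, he, i, rfl, rfl⟩

variable {G} in
theorem ReachOn.symm {S : Finset E} {x y : V} (h : G.ReachOn S x y) : G.ReachOn S y x := by
  induction h with
  | refl => exact .refl
  | tail _ hadj ih => exact ih.head hadj.symm

variable {G} in
theorem ReachOn.mono {S T : Finset E} (hST : S ⊆ T) {x y : V} (h : G.ReachOn S x y) :
    G.ReachOn T x y :=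
  Relation.ReflTransGen.mono (fun _ _ ⟨e, he, i, hi⟩ => ⟨e, hST he, i, hi⟩) _ _ h

theorem reachOn_ends_iff {S : Finset E} {e : E} (he : e ∈ S) (x : V) :
    G.ReachOn S x (G.ends e false) ↔ G.ReachOn S x (G.ends e true) :=
  ⟨fun h => h.tail (G.adjOn_ends he false), fun h => h.tail (G.adjOn_ends he true)⟩

/-- `G.Incident S v`: the vertex `v` is an end of some edge of `S`. -/
def Incident (S : Finset E) (v : V) : Prop :=
  ∃ e ∈ S, ∃ i, G.ends e i = v

theorem incident_ends {S : Finset E} {e : E} (he : e ∈ S) (i : Bool) :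
    G.Incident S (G.ends e i) :=
  ⟨e, he, i, rfl⟩

theorem incident_union [DecidableEq E] {S T : Finset E} {v : V} :
    G.Incident (S ∪ T) v ↔ G.Incident S v ∨ G.Incident T v := by
  simp only [Incident, mem_union, or_and_right, exists_or]

theorem mem_suppV [Fintype V] [DecidableEq V] {S : Finset E} {v : V} :
    v ∈ G.suppV S ↔ G.Incident S v := by
  simp [suppV, Incident]

-- The walk is followed only until it first meets `D`.
theorem exists_reachOn_sdiff [DecidableEq E] (D : Finset E) {H : Finset E} {x u : V}
    (h : G.ReachOn H x u) : ∃ y, (y = u ∨ G.Incident D y) ∧ G.ReachOn (H \ D) x y := by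
  induction h using Relation.ReflTransGen.head_induction_on with
  | refl => exact ⟨u, .inl rfl, .refl⟩
  | head hadj _ ih =>
    obtain ⟨e, he, i, rfl, rfl⟩ := hadj
    by_cases heD : e ∈ D
    · exact ⟨_, .inr (G.incident_ends heD i), .refl⟩
    · obtain ⟨y, hy, hreach⟩ := ih
      exact ⟨y, hy, hreach.head (G.adjOn_ends (mem_sdiff.2 ⟨he, heD⟩) i)⟩

theorem exists_component [Finite V] (H : Finset E) {P : V → Prop} [DecidablePred P] {v : V}
    (hv : P v) :
    ∃ X : Finset V, v ∈ X ∧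
      (∀ x ∈ X, P x ∧ G.ReachOn (H.filter fun e => ∀ i, P (G.ends e i)) v x) ∧
      ∀ e ∈ H, ∀ i, G.ends e i ∈ X → P (G.ends e (!i)) → G.ends e (!i) ∈ X := by
  classical
  cases nonempty_fintype V
  set H' := H.filter fun e => ∀ i, P (G.ends e i)
  have hP {x : V} (hx : G.ReachOn H' v x) : P x := by
    cases hx with
    | refl => exact hv
    | tail _ hadj =>
      obtain ⟨e, he, i, -, rfl⟩ := hadj
      exact (mem_filter.1 he).2 _
  refine ⟨univ.filter (G.ReachOn H' v), by simp [Relation.ReflTransGen.refl], ?_, ?_⟩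
  · exact fun x hx => ⟨hP (mem_filter.1 hx).2, (mem_filter.1 hx).2⟩
  · intro e he i hi hi'
    simp only [mem_filter, mem_univ, true_and] at hi ⊢
    refine hi.tail (G.adjOn_ends (mem_filter.2 ⟨he, ?_⟩) i)
    cases i
    · exact Bool.forall_bool.2 ⟨hP hi, hi'⟩
    · exact Bool.forall_bool.2 ⟨hi', hP hi⟩

section Boundary

variable [DecidableEq V]

/-- The boundary of an edge: the mod 2 sum of its two ends (zero for a loop). -/
def edgeBoundary (e : E) : V → ZMod 2 :=
  Pi.single (G.ends e false) 1 + Pi.single (G.ends e true) 1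

/-- The mod 2 boundary of an edge set, recording the parity of the valency of each vertex.
The edge sets of zero boundary form the cycle space of `G`. -/
def boundary (S : Finset E) : V → ZMod 2 :=
  ∑ e ∈ S, G.edgeBoundary e

theorem edgeBoundary_eq (e : E) (i : Bool) :
    G.edgeBoundary e = Pi.single (G.ends e i) 1 + Pi.single (G.ends e (!i)) 1 := by
  cases i
  · rfl
  · exact add_comm _ _

theorem boundary_singleton (e : E) : G.boundary {e} = G.edgeBoundary e :=
  sum_singleton _ _

theorem boundary_insert [DecidableEq E] {e : E} {S : Finset E} (he : e ∉ S) :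
    G.boundary (insert e S) = G.edgeBoundary e + G.boundary S :=
  sum_insert he

theorem boundary_sdiff [DecidableEq E] {S T : Finset E} (h : S ⊆ T) :
    G.boundary (T \ S) = G.boundary T + G.boundary S := by
  rw [boundary, boundary, boundary, ← sum_sdiff h, add_assoc, ZModModule.add_self, add_zero]

theorem boundary_erase [DecidableEq E] {e : E} {S : Finset E} (he : e ∈ S) :
    G.boundary (S.erase e) = G.boundary S + G.edgeBoundary e := by
  rw [← sdiff_singleton_eq_erase, boundary_sdiff _ (singleton_subset_iff.2 he),
    boundary_singleton]

variable [Fintype E] [DecidableEq E]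

theorem valencyOn_eq_sum (S : Finset E) (v : V) :
    G.valencyOn S v =
      ∑ e ∈ S, ((if G.ends e false = v then 1 else 0) + if G.ends e true = v then 1 else 0) := by
  rw [valencyOn, card_filter, Fintype.sum_prod_type, ← sum_subset S.subset_univ]
  · refine sum_congr rfl fun e he => ?_
    rw [Fintype.sum_bool]
    simp only [he, true_and]
    exact add_comm _ _
  · simp +contextual

theorem natCast_valencyOn (S : Finset E) (v : V) :
    (G.valencyOn S v : ZMod 2) = G.boundary S v := by
  simp [valencyOn_eq_sum, boundary, edgeBoundary, Finset.sum_apply, Pi.single_apply, eq_comm]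

theorem boundary_eq_zero_iff {S : Finset E} :
    G.boundary S = 0 ↔ ∀ v, Even (G.valencyOn S v) := by
  simp only [funext_iff, ← natCast_valencyOn, Pi.zero_apply, ZMod.natCast_eq_zero_iff_even]

theorem valencyOn_insert {e : E} {S : Finset E} (he : e ∉ S) (i : Bool) (v : V) :
    G.valencyOn (insert e S) v =
      (if G.ends e i = v then 1 else 0) + (if G.ends e (!i) = v then 1 else 0) +
        G.valencyOn S v := by
  rw [valencyOn_eq_sum, valencyOn_eq_sum, sum_insert he]
  cases i
  · rfl
  · exact congrArg (· + _) (add_comm _ _)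

theorem valencyOn_eq_zero {S : Finset E} {v : V} (hv : ¬ G.Incident S v) :
    G.valencyOn S v = 0 := by
  rw [valencyOn_eq_sum]
  refine sum_eq_zero fun e he => ?_
  simp only [Incident, not_exists, not_and] at hv
  simp [hv e he]

theorem IsCircuit.boundary_eq_zero [Fintype V] {G : SignedGraph V E} {C : Finset E}
    (hC : G.IsCircuit C) : G.boundary C = 0 := by
  refine G.boundary_eq_zero_iff.2 fun v => ?_
  by_cases hv : v ∈ G.suppV C
  · exact hC.2.2 v hv ▸ even_two
  · exact G.valencyOn_eq_zero (G.mem_suppV.not.1 hv) ▸ Even.zero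

end Boundary

section Trail

variable [DecidableEq E]

/-- `G.IsTrail x S y`: the edges of `S` can be ordered into a walk from `x` to `y` using each of
them exactly once. -/
inductive IsTrail : V → Finset E → V → Prop
  | nil (x : V) : IsTrail x ∅ x
  | cons {e : E} {T : Finset E} {y : V} (i : Bool) (he : e ∉ T)
      (h : IsTrail (G.ends e (!i)) T y) : IsTrail (G.ends e i) (insert e T) y

theorem isTrail_singleton (e : E) (i : Bool) : G.IsTrail (G.ends e i) {e} (G.ends e (!i)) :=
  .cons i (notMem_empty e) (.nil _)

variable {G} {S T : Finset E} {x y z : V}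

theorem IsTrail.eq_empty_or_exists_cons (h : G.IsTrail x S y) :
    (S = ∅ ∧ x = y) ∨
      ∃ e i T, e ∉ T ∧ insert e T = S ∧ G.ends e i = x ∧ G.IsTrail (G.ends e (!i)) T y := by
  cases h with
  | nil => exact .inl ⟨rfl, rfl⟩
  | cons i he h => exact .inr ⟨_, i, _, he, rfl, rfl, h⟩

theorem IsTrail.append (hS : G.IsTrail x S y) (hT : G.IsTrail y T z) (hST : Disjoint S T) :
    G.IsTrail x (S ∪ T) z := by
  induction hS with
  | nil => rwa [empty_union]
  | cons i he _ ih =>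
    rw [disjoint_insert_left] at hST
    rw [insert_union]
    exact .cons i (notMem_union.2 ⟨he, hST.1⟩) (ih hT hST.2)

theorem IsTrail.symm (h : G.IsTrail x S y) : G.IsTrail y S x := by
  induction h with
  | nil x => exact .nil x
  | @cons e T y i he _ ih =>
    have hrev : G.IsTrail (G.ends e (!i)) {e} (G.ends e i) := by
      simpa only [Bool.not_not] using G.isTrail_singleton e (!i)
    rw [insert_eq, union_comm]
    exact ih.append hrev (disjoint_singleton_right.2 he)

theorem IsTrail.reachOn (h : G.IsTrail x S y) : G.ReachOn S x y := by
  induction h with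
  | nil => exact .refl
  | cons i _ _ ih =>
    exact (ih.mono (subset_insert _ _)).head (G.adjOn_ends (mem_insert_self _ _) i)

theorem IsTrail.boundary_eq [DecidableEq V] (h : G.IsTrail x S y) :
    G.boundary S = Pi.single x 1 + Pi.single y 1 := by
  induction h with
  | nil => rw [ZModModule.add_self]; exact sum_empty
  | @cons e T y i he _ ih =>
    rw [boundary_insert _ he, ih, G.edgeBoundary_eq e i, ← add_assoc,
      add_assoc (Pi.single (G.ends e i) 1), ZModModule.add_self, add_zero]

theorem IsTrail.boundary_insert_eq_zero [DecidableEq V] {e : E} (i : Bool)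
    (h : G.IsTrail (G.ends e (!i)) T (G.ends e i)) (he : e ∉ T) :
    G.boundary (insert e T) = 0 := by
  rw [(h.cons i he).boundary_eq, ZModModule.add_self]

theorem IsTrail.exists_split (h : G.IsTrail x S y)
    (hz : z = x ∨ G.Incident S z) :
    ∃ T₁ T₂, Disjoint T₁ T₂ ∧ T₁ ∪ T₂ = S ∧ G.IsTrail x T₁ z ∧ G.IsTrail z T₂ y := by
  induction h with
  | nil x =>
    obtain rfl : z = x := by simpa [Incident] using hz
    exact ⟨∅, ∅, disjoint_bot_left, empty_union _, .nil z, .nil z⟩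
  | @cons e T y i he h ih =>
    by_cases hze : z = G.ends e i
    · subst hze
      exact ⟨∅, insert e T, disjoint_bot_left, empty_union _, .nil _, h.cons i he⟩
    have hzT : z = G.ends e (!i) ∨ G.Incident T z := by
      obtain ⟨f, hf, k, rfl⟩ := hz.resolve_left hze
      obtain rfl | hf := mem_insert.1 hf
      · exact .inl (congrArg _ (Bool.eq_not.2 fun hk => hze (congrArg _ hk)))
      · exact .inr (G.incident_ends hf k)
    obtain ⟨T₁, T₂, hdisj, rfl, h₁, h₂⟩ := ih hzT
    obtain ⟨he₁, he₂⟩ := notMem_union.1 he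
    exact ⟨insert e T₁, T₂, disjoint_insert_left.2 ⟨he₂, hdisj⟩, insert_union _ _ _,
      h₁.cons i he₁, h₂⟩

theorem ReachOn.exists_isTrail (h : G.ReachOn S x y) :
    ∃ T ⊆ S, G.IsTrail x T y := by
  induction h using Relation.ReflTransGen.head_induction_on with
  | refl => exact ⟨∅, empty_subset S, .nil y⟩
  | head hadj _ ih =>
    obtain ⟨e, he, i, rfl, rfl⟩ := hadj
    obtain ⟨T, hT, h⟩ := ih
    by_cases heT : e ∈ T
    · obtain ⟨T₁, T₂, -, rfl, -, h₂⟩ :=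
        h.exists_split (.inr (G.incident_ends heT i))
      exact ⟨T₂, union_subset_right hT, h₂⟩
    · exact ⟨insert e T, insert_subset he hT, h.cons i heT⟩

end Trail

section Cycle

variable [DecidableEq V]

theorem prod_uzpow_single_add_single [Fintype V] (p : V → ℤˣ) (x y : V) :
    ∏ v, p v ^ (Pi.single x 1 + Pi.single y 1 : V → ZMod 2) v = p x * p y := by
  simp only [Pi.add_apply, uzpow_add, prod_mul_distrib]
  simp [Pi.single_apply, pow_ite]

theorem prod_ends [Fintype V] (p : V → ℤˣ) (S : Finset E) :
    ∏ e ∈ S, p (G.ends e false) * p (G.ends e true) = ∏ v, p v ^ G.boundary S v := by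
  classical
  induction S using Finset.induction_on with
  | empty => simp [boundary]
  | insert e S he ih =>
    rw [prod_insert he, ih, boundary_insert _ he, edgeBoundary, ← prod_uzpow_single_add_single]
    simp only [Pi.add_apply, uzpow_add, prod_mul_distrib]

theorem reachOn_of_boundary_eq [Finite V] {T : Finset E} {x y : V}
    (h : G.boundary T = Pi.single x 1 + Pi.single y 1) : G.ReachOn T x y := by
  classical
  cases nonempty_fintype V
  set p : V → ℤˣ := fun z => if G.ReachOn T x z then -1 else 1
  have hedge : ∏ e ∈ T, p (G.ends e false) * p (G.ends e true) = 1 :=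
    prod_eq_one fun e he => by simp only [p, G.reachOn_ends_iff he, Int.units_mul_self]
  rw [prod_ends, h, prod_uzpow_single_add_single] at hedge
  by_contra hxy
  simp [p, hxy, Relation.ReflTransGen.refl] at hedge

/-- A minimal nonempty element of the cycle space. -/
abbrev IsMinimalCycle (C : Finset E) : Prop :=
  Minimal (fun D => D.Nonempty ∧ G.boundary D = 0) C

variable {G} {C : Finset E}

theorem IsMinimalCycle.exists_isTrail [DecidableEq E] [Finite V]
    (hC : G.IsMinimalCycle C) {e : E} (he : e ∈ C) (i : Bool) :
    ∃ T, e ∉ T ∧ insert e T = C ∧ G.IsTrail (G.ends e (!i)) T (G.ends e i) := by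
  have herase : G.boundary (C.erase e) =
      Pi.single (G.ends e (!i)) 1 + Pi.single (G.ends e i) 1 := by
    rw [boundary_erase _ he, hC.prop.2, zero_add, G.edgeBoundary_eq e i, add_comm]
  obtain ⟨T, hT, htrail⟩ := (G.reachOn_of_boundary_eq herase).exists_isTrail
  have heT : e ∉ T := fun h => notMem_erase e C (hT h)
  refine ⟨T, heT, hC.eq_of_le
    ⟨insert_nonempty e T, htrail.boundary_insert_eq_zero i heT⟩ ?_, htrail⟩
  exact insert_subset he (hT.trans (erase_subset e C))

theorem IsMinimalCycle.connOn [Fintype V] (hC : G.IsMinimalCycle C) : G.ConnOn C := by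
  classical
  intro u hu v hv
  obtain ⟨e, he, i, rfl⟩ := G.mem_suppV.1 hu
  obtain ⟨T, heT, rfl, hT⟩ := hC.exists_isTrail he i
  obtain ⟨T₁, T₂, -, hunion, hT₁, -⟩ := (hT.cons i heT).exists_split (.inr (G.mem_suppV.1 hv))
  exact hT₁.reachOn.mono (hunion ▸ subset_union_left)

-- A trail returning to its starting point closes up to a cycle smaller than `C`.
theorem IsMinimalCycle.not_incident [DecidableEq E] {e f : E} {j : Bool} {T : Finset E} {y : V}
    (hC : G.IsMinimalCycle (insert e (insert f T)))
    (he : e ∉ insert f T) (hf : f ∉ T) (hT : G.IsTrail (G.ends f (!j)) T y) :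
    G.ends f j ≠ G.ends f (!j) ∧ ¬ G.Incident T (G.ends f j) := by
  rw [ne_eq, ← not_or]
  intro hreturn
  obtain ⟨T₁, T₂, -, rfl, hT₁, -⟩ := hT.exists_split hreturn
  have hf₁ : f ∉ T₁ := fun h => hf (mem_union_left _ h)
  have hsub : insert f T₁ ⊆ insert f (T₁ ∪ T₂) := insert_subset_insert f subset_union_left
  have heq := hC.eq_of_le
    ⟨insert_nonempty f T₁, hT₁.boundary_insert_eq_zero j hf₁⟩
    (hsub.trans (subset_insert _ _))
  exact he (hsub (heq ▸ mem_insert_self _ _))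

theorem IsMinimalCycle.valencyOn [Fintype V] [Fintype E] [DecidableEq E]
    (hC : G.IsMinimalCycle C) {v : V} (hv : v ∈ G.suppV C) :
    G.valencyOn C v = 2 := by
  obtain ⟨e, he, i, rfl⟩ := G.mem_suppV.1 hv
  obtain ⟨T, heT, rfl, hT⟩ := hC.exists_isTrail he i
  obtain ⟨rfl, hloop⟩ | ⟨f, j, T', hf, rfl, hfe, hT'⟩ := hT.symm.eq_empty_or_exists_cons
  · have hempty : G.valencyOn ∅ (G.ends e i) = 0 :=
      G.valencyOn_eq_zero fun ⟨f, hf, _⟩ => notMem_empty f hf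
    rw [G.valencyOn_insert heT i, if_pos rfl, if_pos hloop.symm, hempty]
  · obtain ⟨hne, hinc⟩ := hC.not_incident heT hf hT'
    have hloop : G.ends e (!i) ≠ G.ends e i := by
      intro hloop
      have hboundary : G.boundary {e} = 0 := by
        rw [boundary_singleton, G.edgeBoundary_eq e i, hloop, ZModModule.add_self]
      have hsub : insert e (insert f T') ⊆ {e} :=
        hC.le_of_le ⟨singleton_nonempty e, hboundary⟩ (by simp)
      obtain rfl : f = e := mem_singleton.1 (hsub (by simp))
      exact heT (mem_insert_self _ _)
    rw [G.valencyOn_insert heT i, G.valencyOn_insert hf j, if_pos rfl, if_neg hloop, if_pos hfe,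
      ← hfe, if_neg hne.symm, G.valencyOn_eq_zero hinc]

theorem IsMinimalCycle.isCircuit [Fintype V] [Fintype E] [DecidableEq E]
    (hC : G.IsMinimalCycle C) : G.IsCircuit C :=
  ⟨hC.prop.1, hC.connOn, fun _ hv => hC.valencyOn hv⟩

variable (G) in
/-- `S` is an element of the cycle space of sign `-1`. -/
def IsUnbalancedCycle (S : Finset E) : Prop :=
  G.boundary S = 0 ∧ G.signOf S = -1

theorem IsUnbalancedCircuit.isUnbalancedCycle [Fintype V] [Fintype E] [DecidableEq E]
    (h : G.IsUnbalancedCircuit C) : G.IsUnbalancedCycle C :=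
  ⟨h.1.boundary_eq_zero, h.2⟩

-- A proper nonempty cycle `D` contained in a minimal unbalanced cycle `C` cannot exist, because
-- the signs of the cycles `D` and `C \ D` multiply to `-1`.
theorem IsUnbalancedCycle.exists_isUnbalancedCircuit_subset [Fintype V] [Fintype E]
    [DecidableEq E] {S : Finset E} (hS : G.IsUnbalancedCycle S) :
    ∃ C ⊆ S, G.IsUnbalancedCircuit C := by
  obtain ⟨C, hCS, hC⟩ := exists_minimal_le_of_wellFoundedLT G.IsUnbalancedCycle S hS
  have hne : C.Nonempty := by
    rw [nonempty_iff_ne_empty]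
    rintro rfl
    exact absurd hC.prop.2 (by simp [signOf])
  suffices hmin : G.IsMinimalCycle C from ⟨C, hCS, hmin.isCircuit, hC.prop.2⟩
  refine ⟨⟨hne, hC.prop.1⟩, fun D ⟨hDne, hD⟩ hDC => ?_⟩
  obtain hpos | hneg := Int.units_eq_one_or (G.signOf D)
  · have hsdiff : G.IsUnbalancedCycle (C \ D) := by
      refine ⟨by rw [boundary_sdiff _ hDC, hC.prop.1, hD, add_zero], ?_⟩
      rw [← hC.prop.2, signOf, signOf, ← prod_sdiff hDC]
      exact (mul_eq_left.2 hpos).symm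
    obtain ⟨e, he⟩ := hDne
    exact absurd he (mem_sdiff.1 (hC.le_of_le hsdiff sdiff_subset (hDC he))).2
  · exact hC.le_of_le ⟨hD, hneg⟩ hDC

end Cycle

section Sign

theorem signOf_eq_neg_one_pow (S : Finset E) : G.signOf S = (-1) ^ #(G.negEdges S) := by
  rw [signOf, negEdges, ← prod_const, prod_filter]
  refine prod_congr rfl fun e _ => ?_
  obtain h | h := Int.units_eq_one_or (G.sign e) <;> simp [h]

theorem signOf_eq_neg_one_iff_odd {S : Finset E} :
    G.signOf S = -1 ↔ Odd #(G.negEdges S) := by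
  rw [signOf_eq_neg_one_pow, neg_one_pow_eq_neg_one_iff_odd (by decide)]

variable {G} in
theorem mem_of_negEdges_eq_singleton {A S : Finset E} {e : E} (hA : G.negEdges A = {e})
    (hSA : S ⊆ A) (hS : G.signOf S = -1) : e ∈ S := by
  obtain ⟨f, hf⟩ := card_pos.1 (G.signOf_eq_neg_one_iff_odd.1 hS).pos
  obtain rfl : f = e := mem_singleton.1 (hA ▸ filter_subset_filter _ hSA hf)
  exact (mem_filter.1 hf).1

/-- Switching: the sign of every edge is multiplied by the values of `p` at its two ends. -/
def switch (p : V → ℤˣ) : SignedGraph V E where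
  ends := G.ends
  sign e := p (G.ends e false) * G.sign e * p (G.ends e true)

theorem sign_switch (p : V → ℤˣ) (e : E) (i : Bool) :
    (G.switch p).sign e = p (G.ends e i) * G.sign e * p (G.ends e (!i)) := by
  cases i
  · rfl
  · simp only [switch, Bool.not_true]
    ac_rfl

theorem switch_one : G.switch 1 = G := by
  simp [switch]

theorem switch_switch (p q : V → ℤˣ) : (G.switch p).switch q = G.switch (p * q) := by
  simp only [switch, Pi.mul_apply, mk.injEq, true_and]
  funext e
  ac_rfl

variable [DecidableEq V]

theorem isUnbalancedCycle_switch [Finite V] (p : V → ℤˣ) {S : Finset E} :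
    (G.switch p).IsUnbalancedCycle S ↔ G.IsUnbalancedCycle S := by
  cases nonempty_fintype V
  refine and_congr_right fun hS => ?_
  replace hS : G.boundary S = 0 := hS
  have hsign : (G.switch p).signOf S = G.signOf S := by
    simp only [signOf, switch, mul_right_comm (p _), prod_mul_distrib (g := G.sign), prod_ends, hS,
      Pi.zero_apply, uzpow_zero, prod_const_one, one_mul]
  rw [hsign]

/-- The edges of `S` joining a vertex of `X` to a vertex outside `X`. -/
def cut (S : Finset E) (X : Finset V) : Finset E :=
  S.filter fun e => ∃ i, G.ends e i ∈ X ∧ G.ends e (!i) ∉ X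

theorem mem_cut {S : Finset E} {X : Finset V} {e : E} :
    e ∈ G.cut S X ↔ e ∈ S ∧ ∃ i, G.ends e i ∈ X ∧ G.ends e (!i) ∉ X :=
  mem_filter

variable [DecidableEq E]

theorem negEdges_switch_ite (A : Finset E) (X : Finset V) :
    (G.switch fun v => if v ∈ X then -1 else 1).negEdges A =
      (G.negEdges A \ G.cut (G.negEdges A) X) ∪ G.cut (A \ G.negEdges A) X := by
  ext e
  simp only [negEdges, switch, cut, Bool.exists_bool, mem_filter, mem_union, mem_sdiff]
  obtain h | h := Int.units_eq_one_or (G.sign e) <;> by_cases h₀ : G.ends e false ∈ X <;>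
    by_cases h₁ : G.ends e true ∈ X <;> simp [h, h₀, h₁]

theorem exists_card_negEdges_switch_lt {A : Finset E} {X : Finset V}
    (hX : #(G.cut (A \ G.negEdges A) X) < #(G.cut (G.negEdges A) X)) :
    ∃ p, #((G.switch p).negEdges A) < #(G.negEdges A) := by
  refine ⟨_, (G.negEdges_switch_ite A X ▸ card_union_le _ _).trans_lt ?_⟩
  have hsdiff : #(G.negEdges A \ G.cut (G.negEdges A) X) + #(G.cut (G.negEdges A) X) =
      #(G.negEdges A) :=
    card_sdiff_add_card_eq_card (filter_subset _ _)
  omega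

end Sign

section Fan

variable [DecidableEq E] {G} {H : Finset E} {u w x y z : V}

variable (G) in
/-- `G.OnTrail H u w z`: some trail in `H` from `u` to `w` passes through `z`. -/
def OnTrail (H : Finset E) (u w z : V) : Prop :=
  ∃ D₁ ⊆ H, ∃ D₂ ⊆ H, Disjoint D₁ D₂ ∧ G.IsTrail u D₁ z ∧ G.IsTrail z D₂ w

theorem OnTrail.symm (h : G.OnTrail H u w z) : G.OnTrail H w u z := by
  obtain ⟨D₁, hD₁, D₂, hD₂, hdisj, h₁, h₂⟩ := h
  exact ⟨D₂, hD₂, D₁, hD₁, hdisj.symm, h₂.symm, h₁.symm⟩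

theorem IsTrail.onTrail {D : Finset E} (h : G.IsTrail u D w) (hD : D ⊆ H)
    (hz : z = u ∨ G.Incident D z) : G.OnTrail H u w z := by
  obtain ⟨D₁, D₂, hdisj, rfl, h₁, h₂⟩ := h.exists_split hz
  exact ⟨D₁, union_subset_left hD, D₂, union_subset_right hD, hdisj, h₁, h₂⟩

-- The new trail follows the old one up to `y`, goes back along `P` to `x`, and rejoins the old
-- trail at `z` along `Q`.
theorem IsTrail.onTrail_of_ear {D₁ D₂ P Q : Finset E} (h₁ : G.IsTrail u D₁ z)
    (h₂ : G.IsTrail z D₂ w) (hP : G.IsTrail x P y) (hQ : G.IsTrail x Q z)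
    (hy : y = u ∨ G.Incident D₁ y) (hD : Disjoint D₁ D₂) (hPQ : Disjoint P Q)
    (hear : Disjoint (P ∪ Q) (D₁ ∪ D₂)) (hH : (P ∪ Q) ∪ (D₁ ∪ D₂) ⊆ H) :
    G.OnTrail H u w x := by
  obtain ⟨A, B, -, rfl, hA, -⟩ := h₁.exists_split hy
  simp only [disjoint_union_left, disjoint_union_right, union_subset_iff] at hD hear hH
  obtain ⟨⟨⟨hPA, hQA⟩, -⟩, hPD₂, hQD₂⟩ := hear
  obtain ⟨⟨hPH, hQH⟩, ⟨hAH, -⟩, hD₂H⟩ := hH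
  refine ⟨A ∪ P, union_subset hAH hPH, Q ∪ D₂, union_subset hQH hD₂H, ?_,
    hA.append hP.symm hPA.symm, hQ.append h₂ hQD₂⟩
  simp only [disjoint_union_left, disjoint_union_right]
  exact ⟨⟨hQA.symm, hPQ⟩, hD.1, hPD₂⟩

theorem OnTrail.of_ear {f : E} (i : Bool) (hf : f ∈ H) (hz : G.OnTrail H u w (G.ends f (!i)))
    (hreach : G.ReachOn (H.erase f) (G.ends f i) u) : G.OnTrail H u w (G.ends f i) := by
  obtain ⟨D₁, hD₁, D₂, hD₂, hdisj, h₁, h₂⟩ := hz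
  by_cases hinc : G.Incident (D₁ ∪ D₂) (G.ends f i)
  · exact (h₁.append h₂ hdisj).onTrail (union_subset hD₁ hD₂) (.inr hinc)
  have hfD : f ∉ D₁ ∪ D₂ := fun h => hinc (G.incident_ends h i)
  obtain ⟨y, hy, hxy⟩ := G.exists_reachOn_sdiff (D₁ ∪ D₂) hreach
  obtain ⟨P, hPH, hP⟩ := hxy.exists_isTrail
  have hPf : Disjoint P {f} :=
    disjoint_singleton_right.2 fun h => notMem_erase f H (mem_sdiff.1 (hPH h)).1
  have hear : Disjoint (P ∪ {f}) (D₁ ∪ D₂) :=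
    disjoint_union_left.2
      ⟨disjoint_sdiff.symm.mono_left hPH, disjoint_singleton_left.2 hfD⟩
  have hH : (P ∪ {f}) ∪ (D₁ ∪ D₂) ⊆ H :=
    union_subset (union_subset (hPH.trans (sdiff_subset.trans (erase_subset f H)))
      (singleton_subset_iff.2 hf)) (union_subset hD₁ hD₂)
  have hQ := G.isTrail_singleton f i
  rw [incident_union, ← or_assoc] at hy
  obtain hy₁ | hy₂ := hy
  · exact h₁.onTrail_of_ear h₂ hP hQ hy₁ hdisj hPf hear hH
  · rw [union_comm D₁ D₂] at hear hH
    exact (h₂.symm.onTrail_of_ear h₁.symm hP hQ (.inr hy₂) hdisj.symm hPf hear hH).symm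

-- Two edges leave the component of `v` among the vertices on no trail from `u` to `w`, and their
-- outer ends lie on such trails: together they form an ear.
theorem onTrail_of_one_lt_card_cut [Finite V] [DecidableEq V] {v : V} (huw : G.ReachOn H u w)
    (hcut : ∀ X : Finset V, v ∈ X → u ∉ X → w ∉ X → 1 < #(G.cut H X)) :
    G.OnTrail H u w v := by
  classical
  by_contra hv
  obtain ⟨R, hR, htrail⟩ := huw.exists_isTrail
  have hu : G.OnTrail H u w u := htrail.onTrail hR (.inl rfl)
  have hw : G.OnTrail H u w w := (htrail.symm.onTrail hR (.inl rfl)).symm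
  obtain ⟨X, hvX, hX, hclosed⟩ := G.exists_component H (P := fun x => ¬ G.OnTrail H u w x) hv
  obtain ⟨f₁, hf₁, f₂, hf₂, hne⟩ := one_lt_card.1 <|
    hcut X hvX (fun h => (hX _ h).1 hu) (fun h => (hX _ h).1 hw)
  have hout {f : E} {i : Bool} (hf : f ∈ H) (hi : G.ends f i ∈ X) (hi' : G.ends f (!i) ∉ X) :
      G.OnTrail H u w (G.ends f (!i)) :=
    not_not.1 fun h => hi' (hclosed f hf i hi h)
  obtain ⟨hf₁, i₁, hx₁, hy₁⟩ := G.mem_cut.1 hf₁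
  obtain ⟨hf₂, i₂, hx₂, hy₂⟩ := G.mem_cut.1 hf₂
  have hgood₁ := hout hf₁ hx₁ hy₁
  obtain ⟨D₁, hD₁, D₂, hD₂, hdisj, h₁, h₂⟩ := hout hf₂ hx₂ hy₂
  have hX' {x : V} (hx : x ∈ X) : G.ReachOn (H.erase f₁) v x := by
    refine (hX x hx).2.mono fun e he => ?_
    obtain ⟨heH, he⟩ := mem_filter.1 he
    exact mem_erase.2 ⟨fun h => he (!i₁) (h ▸ hgood₁), heH⟩
  have hD₁' : D₁ ⊆ H.erase f₁ := fun e he => by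
    refine mem_erase.2 ⟨?_, hD₁ he⟩
    rintro rfl
    exact (hX _ hx₁).1 <| (h₁.append h₂ hdisj).onTrail (union_subset hD₁ hD₂)
      (.inr (G.incident_ends (mem_union_left _ he) i₁))
  refine (hX _ hx₁).1 (.of_ear i₁ hf₁ hgood₁ ?_)
  calc
    G.ReachOn (H.erase f₁) (G.ends f₁ i₁) v := (hX' hx₁).symm
    G.ReachOn (H.erase f₁) _ (G.ends f₂ i₂) := hX' hx₂
    G.ReachOn (H.erase f₁) _ (G.ends f₂ (!i₂)) :=
      .single (G.adjOn_ends (mem_erase.2 ⟨hne.symm, hf₂⟩) i₂)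
    G.ReachOn (H.erase f₁) _ u := h₁.symm.reachOn.mono hD₁'

end Fan

section Tight

/-- No two unbalanced elements of the cycle space contained in `A` are disjoint. -/
def UnbalancedCyclesMeet [DecidableEq V] (A : Finset E) : Prop :=
  ∀ S₁ ⊆ A, ∀ S₂ ⊆ A, G.IsUnbalancedCycle S₁ → G.IsUnbalancedCycle S₂ → ¬ Disjoint S₁ S₂

/-- Some switching of `G` leaves exactly one negative edge in `A`. -/
def TightOn (A : Finset E) : Prop :=
  ∃ p, #((G.switch p).negEdges A) = 1

variable {G} {A D H : Finset E} {u w : V} {a b : E} {i j : Bool}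

theorem TightOn.of_switch {p : V → ℤˣ} (h : (G.switch p).TightOn A) : G.TightOn A := by
  obtain ⟨q, hq⟩ := h
  exact ⟨p * q, G.switch_switch p q ▸ hq⟩

variable [DecidableEq V]

theorem unbalancedCyclesMeet_switch [Finite V] (p : V → ℤˣ) :
    (G.switch p).UnbalancedCyclesMeet A ↔ G.UnbalancedCyclesMeet A := by
  simp only [UnbalancedCyclesMeet, isUnbalancedCycle_switch]

theorem reachOn_of_forall_cut_eq_empty [Finite V]
    (h : ∀ X : Finset V, G.cut H X = ∅ → u ∈ X → w ∈ X) : G.ReachOn H u w := by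
  classical
  cases nonempty_fintype V
  have hmem {x : V} : x ∈ univ.filter (G.ReachOn H u) ↔ G.ReachOn H u x := by simp
  refine hmem.1 (h _ (eq_empty_of_forall_notMem fun e he => ?_) (hmem.2 .refl))
  obtain ⟨he, i, hi, hi'⟩ := G.mem_cut.1 he
  exact hi' (hmem.2 ((hmem.1 hi).tail (G.adjOn_ends he i)))

theorem IsTrail.isUnbalancedCycle_insert [DecidableEq E]
    (h : G.IsTrail (G.ends a (!i)) D (G.ends a i))
    (hD : D ⊆ A \ G.negEdges A) (ha : a ∈ G.negEdges A) : G.IsUnbalancedCycle (insert a D) := by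
  have haD : a ∉ D := fun h => (mem_sdiff.1 (hD h)).2 ha
  have hpos : ∀ e ∈ D, G.sign e = 1 := fun e he => by
    obtain ⟨heA, heN⟩ := mem_sdiff.1 (hD he)
    exact (Int.units_eq_one_or _).resolve_right fun h => heN (mem_filter.2 ⟨heA, h⟩)
  refine ⟨h.boundary_insert_eq_zero i haD, ?_⟩
  rw [signOf, prod_insert haD, prod_eq_one hpos, mul_one, (mem_filter.1 ha).2]

theorem onTrail_of_card_cut_le [Finite V] [DecidableEq E] (ha : a ∈ G.negEdges A)
    (hb : b ∈ G.negEdges A) (hab : a ≠ b) (hij : G.ends a i = G.ends b j)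
    (hcut : ∀ X, #(G.cut (G.negEdges A) X) ≤ #(G.cut (A \ G.negEdges A) X)) :
    G.OnTrail (A \ G.negEdges A) (G.ends a (!i)) (G.ends b (!j)) (G.ends a i) := by
  refine onTrail_of_one_lt_card_cut (reachOn_of_forall_cut_eq_empty fun X hX hu => ?_)
    fun X hv hu hw => ?_
  · have hempty : G.cut (G.negEdges A) X = ∅ := by simpa [hX] using hcut X
    have hend {e : E} (he : e ∈ G.negEdges A) (k : Bool) (hk : G.ends e k ∈ X) :
        G.ends e (!k) ∈ X := by
      by_contra hk'
      exact notMem_empty e (hempty ▸ G.mem_cut.2 ⟨he, k, hk, hk'⟩)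
    have hv : G.ends a i ∈ X := by simpa only [Bool.not_not] using hend ha (!i) hu
    exact hend hb j (hij ▸ hv)
  · refine (one_lt_card.2 ⟨a, ?_, b, ?_, hab⟩).trans_le (hcut X)
    · exact G.mem_cut.2 ⟨ha, i, hv, hu⟩
    · exact G.mem_cut.2 ⟨hb, j, hij ▸ hv, hw⟩

theorem exists_disjoint_isUnbalancedCycle [Finite V] [DecidableEq E] (ha : a ∈ G.negEdges A)
    (hb : b ∈ G.negEdges A) (hab : a ≠ b) (hij : G.ends a i = G.ends b j)
    (hcut : ∀ X, #(G.cut (G.negEdges A) X) ≤ #(G.cut (A \ G.negEdges A) X)) :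
    ∃ S₁ ⊆ A, ∃ S₂ ⊆ A, G.IsUnbalancedCycle S₁ ∧ G.IsUnbalancedCycle S₂ ∧ Disjoint S₁ S₂ := by
  obtain ⟨D₁, hD₁, D₂, hD₂, hdisj, h₁, h₂⟩ := onTrail_of_card_cut_le ha hb hab hij hcut
  rw [hij] at h₂
  refine ⟨insert a D₁, insert_subset (mem_filter.1 ha).1 (hD₁.trans sdiff_subset),
    insert b D₂, insert_subset (mem_filter.1 hb).1 (hD₂.trans sdiff_subset),
    h₁.isUnbalancedCycle_insert hD₁ ha, h₂.symm.isUnbalancedCycle_insert hD₂ hb, ?_⟩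
  have haD₂ : a ∉ D₂ := fun h => (mem_sdiff.1 (hD₂ h)).2 ha
  have hbD₁ : b ∉ D₁ := fun h => (mem_sdiff.1 (hD₁ h)).2 hb
  simp [disjoint_insert_left, disjoint_insert_right, hab.symm, haD₂, hbD₁, hdisj]

theorem tightOn_of_card_negEdges_eq_three [Finite V] (hA : G.IsUnbalancedCycle A)
    (hmeet : G.UnbalancedCyclesMeet A) (hcard : #(G.negEdges A) = 3) (ha : a ∈ G.negEdges A)
    (hb : b ∈ G.negEdges A) (hab : a ≠ b) (hij : G.ends a i = G.ends b j) : G.TightOn A := by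
  classical
  by_contra htight
  have hcut (X : Finset V) : #(G.cut (G.negEdges A) X) ≤ #(G.cut (A \ G.negEdges A) X) := by
    by_contra! hX
    obtain ⟨p, hp⟩ := G.exists_card_negEdges_switch_lt hX
    obtain ⟨k, hk⟩ := signOf_eq_neg_one_iff_odd _ |>.1 ((G.isUnbalancedCycle_switch p).2 hA).2
    exact htight ⟨p, by omega⟩
  obtain ⟨S₁, hS₁, S₂, hS₂, h₁, h₂, hdisj⟩ :=
    exists_disjoint_isUnbalancedCycle ha hb hab hij hcut
  exact hmeet S₁ hS₁ S₂ hS₂ h₁ h₂ hdisj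

theorem IsUnbalancedCycle.tightOn_of_forall_ends_ne (hA : G.IsUnbalancedCycle A)
    (hmeet : G.UnbalancedCyclesMeet A)
    (hends : ∀ e ∈ A, ∀ f ∈ A, e ≠ f → ∀ i j, G.ends e i ≠ G.ends f j) : G.TightOn A := by
  have hloop {e : E} (he : e ∈ A) : G.ends e false = G.ends e true := by
    by_contra hne
    have h := congrFun hA.1 (G.ends e false)
    rw [boundary, Finset.sum_apply, sum_eq_single_of_mem e he] at h
    · simp [edgeBoundary, hne] at h
    · intro f hf hfe
      simp [edgeBoundary, hends e he f hf hfe.symm]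
  have hcycle {e : E} (he : e ∈ G.negEdges A) : G.IsUnbalancedCycle {e} := by
    obtain ⟨heA, hneg⟩ := mem_filter.1 he
    refine ⟨?_, (prod_singleton _ _).trans hneg⟩
    rw [boundary_singleton, edgeBoundary, hloop heA, ZModModule.add_self]
  refine ⟨1, G.switch_one.symm ▸ ?_⟩
  refine le_antisymm (card_le_one.2 fun e he f hf => ?_) (signOf_eq_neg_one_iff_odd _ |>.1 hA.2).pos
  by_contra hne
  exact hmeet {e} (singleton_subset_iff.2 (mem_filter.1 he).1) {f}
    (singleton_subset_iff.2 (mem_filter.1 hf).1) (hcycle he) (hcycle hf)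
    (disjoint_singleton.2 hne)

end Tight

section Merge

variable [DecidableEq E]

/-- The graph in which the edges `e₁` and `e₂`, meeting at the `i`-th end of `e₁` and the `j`-th
end of `e₂`, are split off that vertex and merged into a single edge. The new edge is `e₁`; the
edge `e₂` stays in place and is to be ignored. -/
def merge (e₁ e₂ : E) (i j : Bool) : SignedGraph V E where
  ends := Function.update G.ends e₁ fun k => bif k then G.ends e₂ (!j) else G.ends e₁ (!i)
  sign := Function.update G.sign e₁ (G.sign e₁ * G.sign e₂)

/-- The edge set of `G` corresponding to the edge set `S` of `G.merge e₁ e₂ i j`. -/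
def unmerge (e₁ e₂ : E) (S : Finset E) : Finset E :=
  if e₁ ∈ S then insert e₂ S else S

variable {G} {A S T : Finset E} {e₁ e₂ : E} {i j : Bool}

theorem unmerge_erase (h₁ : e₁ ∈ A) (h₂ : e₂ ∈ A) (hne : e₁ ≠ e₂) :
    unmerge e₁ e₂ (A.erase e₂) = A := by
  rw [unmerge, if_pos (mem_erase.2 ⟨hne, h₁⟩), insert_erase h₂]

theorem unmerge_subset (h₂ : e₂ ∈ A) (hS : S ⊆ A) : unmerge e₁ e₂ S ⊆ A := by
  rw [unmerge]
  split_ifs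
  · exact insert_subset h₂ hS
  · exact hS

theorem disjoint_unmerge (hS : e₂ ∉ S) (hT : e₂ ∉ T) (hST : Disjoint S T) :
    Disjoint (unmerge e₁ e₂ S) (unmerge e₁ e₂ T) := by
  rw [unmerge, unmerge]
  split_ifs with h₁ h₂
  · exact (disjoint_left.1 hST h₁ h₂).elim
  · exact disjoint_insert_left.2 ⟨hT, hST⟩
  · exact disjoint_insert_right.2 ⟨hS, hST⟩
  · exact hST

@[to_additive]
theorem prod_unmerge {M : Type*} [CommMonoid M] (φ : E → M) (hS : e₂ ∉ S) :
    ∏ e ∈ unmerge e₁ e₂ S, φ e = ∏ e ∈ S, Function.update φ e₁ (φ e₁ * φ e₂) e := by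
  rw [unmerge]
  split_ifs with h₁
  · rw [prod_update_of_mem h₁, sdiff_singleton_eq_erase, prod_insert hS,
      ← mul_prod_erase S φ h₁, mul_left_comm, mul_assoc]
  · rw [prod_update_of_notMem h₁]

theorem signOf_merge (hS : e₂ ∉ S) :
    (G.merge e₁ e₂ i j).signOf S = G.signOf (unmerge e₁ e₂ S) :=
  (prod_unmerge G.sign hS).symm

theorem card_negEdges_merge (h₁ : e₁ ∈ A) (h₂ : e₂ ∈ A) (hne : e₁ ≠ e₂) :
    #(G.negEdges A) = #((G.merge e₁ e₂ i j).negEdges (A.erase e₂)) ∨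
      e₁ ∈ G.negEdges A ∧ e₂ ∈ G.negEdges A ∧
        #(G.negEdges A) = #((G.merge e₁ e₂ i j).negEdges (A.erase e₂)) + 2 := by
  have hrest : ∑ e ∈ (A.erase e₂).erase e₁, (if (G.merge e₁ e₂ i j).sign e = -1 then 1 else 0) =
      ∑ e ∈ (A.erase e₂).erase e₁, if G.sign e = -1 then 1 else 0 :=
    sum_congr rfl fun e he => by simp [merge, ne_of_mem_erase he]
  have h₁' : e₁ ∈ A.erase e₂ := mem_erase.2 ⟨hne, h₁⟩
  simp only [negEdges, mem_filter, h₁, h₂, true_and, card_filter, ← add_sum_erase A _ h₂,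
    ← add_sum_erase (A.erase e₂) _ h₁', hrest]
  obtain hs₁ | hs₁ := Int.units_eq_one_or (G.sign e₁) <;>
    obtain hs₂ | hs₂ := Int.units_eq_one_or (G.sign e₂) <;>
    simp [merge, hs₁, hs₂, add_comm, ← add_assoc]

theorem switch_merge (p : V → ℤˣ) (hij : G.ends e₁ i = G.ends e₂ j) :
    (G.merge e₁ e₂ i j).switch p = (G.switch p).merge e₁ e₂ i j := by
  have hsign : ((G.merge e₁ e₂ i j).switch p).sign = ((G.switch p).merge e₁ e₂ i j).sign := by
    funext e
    obtain rfl | he := eq_or_ne e e₁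
    · calc
        _ = p (G.ends e (!i)) * (G.sign e * G.sign e₂) * p (G.ends e₂ (!j)) := by
          simp [switch, merge]
        _ = (p (G.ends e i) * p (G.ends e i)) *
              (p (G.ends e (!i)) * (G.sign e * G.sign e₂) * p (G.ends e₂ (!j))) := by
          rw [Int.units_mul_self, one_mul]
        _ = (p (G.ends e i) * G.sign e * p (G.ends e (!i))) *
              (p (G.ends e₂ j) * G.sign e₂ * p (G.ends e₂ (!j))) := by
          rw [← hij]
          ac_rfl
        _ = _ := by
          rw [← sign_switch, ← sign_switch]
          simp [merge]
    · simp [merge, switch, he]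
  exact congrArg (SignedGraph.mk _) hsign

variable [DecidableEq V]

theorem edgeBoundary_merge (hij : G.ends e₁ i = G.ends e₂ j) :
    (G.merge e₁ e₂ i j).edgeBoundary =
      Function.update G.edgeBoundary e₁ (G.edgeBoundary e₁ + G.edgeBoundary e₂) := by
  funext e
  obtain rfl | he := eq_or_ne e e₁
  · rw [Function.update_self, G.edgeBoundary_eq e i, G.edgeBoundary_eq e₂ j, ← hij,
      add_comm (Pi.single (G.ends e i) 1), add_assoc, ← add_assoc (Pi.single (G.ends e i) 1),
      ZModModule.add_self, zero_add]
    simp [edgeBoundary, merge]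
  · simp [edgeBoundary, merge, he]

theorem boundary_merge (hij : G.ends e₁ i = G.ends e₂ j) (hS : e₂ ∉ S) :
    (G.merge e₁ e₂ i j).boundary S = G.boundary (unmerge e₁ e₂ S) := by
  rw [boundary, boundary, edgeBoundary_merge hij, sum_unmerge _ hS]

theorem isUnbalancedCycle_merge (hij : G.ends e₁ i = G.ends e₂ j) (hS : e₂ ∉ S) :
    (G.merge e₁ e₂ i j).IsUnbalancedCycle S ↔ G.IsUnbalancedCycle (unmerge e₁ e₂ S) := by
  rw [IsUnbalancedCycle, IsUnbalancedCycle, boundary_merge hij hS, signOf_merge hS]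

theorem UnbalancedCyclesMeet.merge (hmeet : G.UnbalancedCyclesMeet A) (h₂ : e₂ ∈ A)
    (hij : G.ends e₁ i = G.ends e₂ j) :
    (G.merge e₁ e₂ i j).UnbalancedCyclesMeet (A.erase e₂) := by
  intro S hS T hT hS' hT' hST
  have heS : e₂ ∉ S := fun h => notMem_erase e₂ A (hS h)
  have heT : e₂ ∉ T := fun h => notMem_erase e₂ A (hT h)
  exact hmeet _ (unmerge_subset h₂ (hS.trans (erase_subset _ _)))
    _ (unmerge_subset h₂ (hT.trans (erase_subset _ _)))
    ((isUnbalancedCycle_merge hij heS).1 hS') ((isUnbalancedCycle_merge hij heT).1 hT')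
    (disjoint_unmerge heS heT hST)

end Merge

-- Undoing a merge turns a single negative edge into at most three, two of them adjacent.
theorem IsUnbalancedCycle.tightOn [Finite V] [DecidableEq V] {G : SignedGraph V E} {A : Finset E}
    (hA : G.IsUnbalancedCycle A) (hmeet : G.UnbalancedCyclesMeet A) : G.TightOn A := by
  classical
  induction A using Finset.strongInduction generalizing G with
  | H A ih =>
  by_cases hends : ∀ e ∈ A, ∀ f ∈ A, e ≠ f → ∀ i j, G.ends e i ≠ G.ends f j
  · exact hA.tightOn_of_forall_ends_ne hmeet hends
  push Not at hends
  obtain ⟨e₁, h₁, e₂, h₂, hne, i, j, hij⟩ := hends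
  have hmerge : (G.merge e₁ e₂ i j).IsUnbalancedCycle (A.erase e₂) := by
    rwa [isUnbalancedCycle_merge hij (notMem_erase e₂ A), unmerge_erase h₁ h₂ hne]
  obtain ⟨p, hp⟩ := ih _ (erase_ssubset h₂) hmerge (hmeet.merge h₂ hij)
  rw [switch_merge p hij] at hp
  obtain hcard | ⟨hneg₁, hneg₂, hcard⟩ :=
    (G.switch p).card_negEdges_merge (i := i) (j := j) h₁ h₂ hne
  · exact ⟨p, hcard.trans hp⟩
  · exact .of_switch <| tightOn_of_card_negEdges_eq_three ((G.isUnbalancedCycle_switch p).2 hA)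
      ((unbalancedCyclesMeet_switch p).2 hmeet) (by rw [hcard, hp]) hneg₁ hneg₂ hne hij

end SignedGraph

open SignedGraph in
theorem stmt14_general {V E : Type} [Fintype V] [Fintype E] [DecidableEq V] [DecidableEq E]
    (G : SignedGraph V E) (heven : ∀ v, Even (G.valency v)) (hodd : Odd #(G.negEdges univ))
    (hmeet : ∀ S₁ S₂ : Finset E,
      G.IsUnbalancedCircuit S₁ → G.IsUnbalancedCircuit S₂ → (S₁ ∩ S₂).Nonempty) :
    (∃ e : E, ∀ S : Finset E, G.IsUnbalancedCircuit S → e ∈ S) ∧ G.TightlyUnbalanced := by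
  have huniv : G.IsUnbalancedCycle univ :=
    ⟨G.boundary_eq_zero_iff.2 heven, G.signOf_eq_neg_one_iff_odd.2 hodd⟩
  have hcycles : G.UnbalancedCyclesMeet univ := by
    intro S₁ _ S₂ _ h₁ h₂ hdisj
    obtain ⟨C₁, hC₁, hC₁'⟩ := h₁.exists_isUnbalancedCircuit_subset
    obtain ⟨C₂, hC₂, hC₂'⟩ := h₂.exists_isUnbalancedCircuit_subset
    exact not_disjoint_iff_nonempty_inter.2 (hmeet C₁ C₂ hC₁' hC₂') (hdisj.mono hC₁ hC₂)
  obtain ⟨p, hp⟩ := huniv.tightOn hcycles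
  obtain ⟨e, he⟩ := card_eq_one.1 hp
  have hmem (S : Finset E) (hS : G.IsUnbalancedCircuit S) : e ∈ S :=
    mem_of_negEdges_eq_singleton he (subset_univ S)
      ((G.isUnbalancedCycle_switch p).2 hS.isUnbalancedCycle).2
  obtain ⟨C, -, hC⟩ := huniv.exists_isUnbalancedCircuit_subset
  refine ⟨⟨e, hmem⟩, fun hbal => ?_, e, fun S hS heS => ?_⟩
  · exact absurd (hbal C hC.1) (by rw [hC.2]; decide)
  · exact (Int.units_eq_one_or _).resolve_right fun hneg => heS (hmem S ⟨hS, hneg⟩)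

open SignedGraph Finset in
/-- Let `G` be a signed eulerian graph with an odd number of
negative edges.  If any two unbalanced circuits of `G` have an edge in
common, then there exists an edge `e` of `G` that is contained in every
unbalanced circuit of `G`; in particular, `G` is tightly unbalanced. -/
theorem stmt14 {V E : Type} [Fintype V] [Fintype E] [DecidableEq V]
    [DecidableEq E] (G : SignedGraph V E) (hG : G.Eulerian)
    (hodd : Odd (G.negEdges univ).card)
    (hmeet : ∀ S₁ S₂ : Finset E,
      G.IsUnbalancedCircuit S₁ → G.IsUnbalancedCircuit S₂ →
      (S₁ ∩ S₂).Nonempty) :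
    (∃ e : E, ∀ S : Finset E, G.IsUnbalancedCircuit S → e ∈ S) ∧
    G.TightlyUnbalanced := by
  exact stmt14_general G hG.2 hodd hmeet
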